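/- For every integer q ≥ 0, the map v ↦ π_dG^[q] v on bounded integrable functions on [a,b] is linear, satisfies π_dG^[q] v = v whenever v is a polynomial of degree at most q, and there is a constant C = C(q) > 0, independent of the interval [a,b], such that ‖π_dG^[q] v‖_{L∞([a,b])} ≤ C·‖v‖_{L∞([a,b])} for every bounded integrable v : [a,b] → ℝ. -/

import Mathlib

open MeasureTheory

/-!
A polynomial `p` of degree at most `q` with `p(b) = 0` factors as `(x - b) r` with `deg r ≤ q - 1`,
so orthogonality of `p` to `r` says `∫ (b - x) r² = 0` and forces `p = 0`. Hence the interpolation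
conditions determine `π_dG^[q] v`, and linearity and exactness on polynomials hold because both
sides satisfy the same conditions. On `[0, 1]` the value at `1` and the first `q` moments therefore
embed the polynomials of degree at most `q` in a finite-dimensional space, so they control the
maximum norm; for `π_dG^[q] v` they agree with those of `v`, which the maximum of `|v|` bounds. The
conditions are invariant under affine changes of variable, so the constant obtained on `[0, 1]`
serves every interval.
-/

section DGInterpolant

open Polynomial

theorem exists_norm_le_mul_norm_of_ker_eq_bot {𝕜 V F W : Type*} [NontriviallyNormedField 𝕜]
    [CompleteSpace 𝕜] [AddCommGroup V] [Module 𝕜 V] [NormedAddCommGroup F] [NormedSpace 𝕜 F]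
    [FiniteDimensional 𝕜 F] [SeminormedAddCommGroup W] [NormedSpace 𝕜 W] (L : V →ₗ[𝕜] F)
    (hL : LinearMap.ker L = ⊥) (S : V →ₗ[𝕜] W) :
    ∃ K : ℝ, 0 < K ∧ ∀ v, ‖S v‖ ≤ K * ‖L v‖ := by
  obtain ⟨g, hg⟩ := L.exists_leftInverse_of_injective hL
  obtain ⟨K, hK, hbound⟩ := (S ∘ₗ g).toContinuousLinearMap.bound
  refine ⟨K, hK, fun v => ?_⟩
  have hgL : g (L v) = v := LinearMap.congr_fun hg v
  simpa [hgL] using hbound (L v)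

/-- `IsDGInterpolant q a b v p` says that `p` is the interpolant `π_dG^[q] v` on `[a, b]`. The test
polynomials are those with `natDegree + 1 ≤ q`, so that there are none, not even constants, for
`q = 0`. -/
structure IsDGInterpolant (q : ℕ) (a b : ℝ) (v : ℝ → ℝ) (p : ℝ[X]) : Prop where
  natDegree_le : p.natDegree ≤ q
  eval_right : p.eval b = v b
  integral_eq_zero : ∀ w : ℝ[X], w.natDegree + 1 ≤ q →
    ∫ x in a..b, (v x - p.eval x) * w.eval x = 0

variable {q : ℕ} {a b : ℝ} {u v : ℝ → ℝ} {p r w : ℝ[X]}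

theorem intervalIntegrable_mul_eval (hv : IntervalIntegrable v volume a b) (w : ℝ[X]) :
    IntervalIntegrable (fun x => v x * w.eval x) volume a b :=
  hv.mul_continuousOn w.continuousOn

theorem intervalIntegrable_eval (p : ℝ[X]) (a b : ℝ) :
    IntervalIntegrable (fun x => p.eval x) volume a b :=
  p.continuous.intervalIntegrable a b

theorem eq_zero_of_integral_sub_mul_sq_eq_zero (hab : a < b)
    (hr : ∫ x in a..b, (b - x) * r.eval x ^ 2 = 0) : r = 0 := by
  by_contra hr0
  have hroot : ∃ c ∈ Set.Ioo a b, r.eval c ≠ 0 := by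
    by_contra! hzero
    exact hr0 (r.eq_zero_of_infinite_isRoot ((Set.Ioo_infinite hab).mono hzero))
  obtain ⟨c, ⟨hac, hcb⟩, hc⟩ := hroot
  refine (intervalIntegral.integral_pos hab (by fun_prop) (fun x hx => ?_)
    ⟨c, ⟨hac.le, hcb.le⟩, ?_⟩).ne' hr
  · exact mul_nonneg (sub_nonneg.mpr hx.2) (sq_nonneg _)
  · exact mul_pos (sub_pos.mpr hcb) (by positivity)

namespace IsDGInterpolant

theorem eq_zero (hab : a < b) (hp : IsDGInterpolant q a b 0 p) : p = 0 := by
  by_contra hp0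
  obtain ⟨r, rfl⟩ : X - C b ∣ p := dvd_iff_isRoot.mpr hp.eval_right
  have hr : r ≠ 0 := right_ne_zero_of_mul hp0
  have hdeg : r.natDegree + 1 ≤ q := by
    have := hp.natDegree_le
    rwa [natDegree_mul (X_sub_C_ne_zero b) hr, natDegree_X_sub_C, add_comm] at this
  refine hr (eq_zero_of_integral_sub_mul_sq_eq_zero hab ?_)
  rw [← hp.integral_eq_zero r hdeg]
  congr 1 with x
  simp only [Pi.zero_apply, eval_mul, eval_sub, eval_X, eval_C]
  ring

theorem of_eval (hp : p.natDegree ≤ q) : IsDGInterpolant q a b (fun x => p.eval x) p :=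
  ⟨hp, rfl, by simp⟩

theorem add (hu : IntervalIntegrable u volume a b) (hv : IntervalIntegrable v volume a b)
    (hp : IsDGInterpolant q a b u p) (hr : IsDGInterpolant q a b v r) :
    IsDGInterpolant q a b (u + v) (p + r) where
  natDegree_le := natDegree_add_le_of_degree_le hp.natDegree_le hr.natDegree_le
  eval_right := by simp [hp.eval_right, hr.eval_right]
  integral_eq_zero w hw := by
    calc ∫ x in a..b, ((u + v) x - (p + r).eval x) * w.eval x
        = ∫ x in a..b, ((u x - p.eval x) * w.eval x + (v x - r.eval x) * w.eval x) := by
          congr 1 with x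
          simp only [Pi.add_apply, eval_add]
          ring
      _ = 0 := by
          rw [intervalIntegral.integral_add
            (intervalIntegrable_mul_eval (hu.sub (intervalIntegrable_eval p a b)) w)
            (intervalIntegrable_mul_eval (hv.sub (intervalIntegrable_eval r a b)) w),
            hp.integral_eq_zero w hw, hr.integral_eq_zero w hw, add_zero]

theorem const_mul (c : ℝ) (hp : IsDGInterpolant q a b v p) :
    IsDGInterpolant q a b (fun x => c * v x) (C c * p) where
  natDegree_le := (natDegree_C_mul_le c p).trans hp.natDegree_le
  eval_right := by simp [hp.eval_right]
  integral_eq_zero w hw := by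
    simp only [eval_mul, eval_C, ← mul_sub, mul_assoc, intervalIntegral.integral_const_mul,
      hp.integral_eq_zero w hw, mul_zero]

theorem unique (hab : a < b) (hv : IntervalIntegrable v volume a b) (hp : IsDGInterpolant q a b v p)
    (hr : IsDGInterpolant q a b v r) : p = r := by
  have hsub : IsDGInterpolant q a b 0 (p + C (-1) * r) := by
    convert hp.add hv (hv.const_mul (-1)) (hr.const_mul (-1)) using 1
    ext x
    simp
  simpa [add_neg_eq_zero] using hsub.eq_zero hab

theorem comp_mul_add {c d : ℝ} (hc : c ≠ 0)
    (hp : IsDGInterpolant q (c * a + d) (c * b + d) v p) :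
    IsDGInterpolant q a b (fun x => v (c * x + d)) (p.comp (C c * X + C d)) where
  natDegree_le := by simpa [natDegree_comp, natDegree_linear hc] using hp.natDegree_le
  eval_right := by simpa using hp.eval_right
  integral_eq_zero w hw := by
    set w' : ℝ[X] := w.comp (C c⁻¹ * X + C (-(c⁻¹ * d))) with hw'
    have hdeg : w'.natDegree + 1 ≤ q := by
      rwa [hw', natDegree_comp, natDegree_linear (inv_ne_zero hc), mul_one]
    have heval (x : ℝ) : w'.eval (c * x + d) = w.eval x := by
      have : c⁻¹ * (c * x + d) + -(c⁻¹ * d) = x := by field_simp; ring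
      simp [hw', this]
    calc ∫ x in a..b, (v (c * x + d) - (p.comp (C c * X + C d)).eval x) * w.eval x
        = ∫ x in a..b, (v (c * x + d) - p.eval (c * x + d)) * w'.eval (c * x + d) := by
          simp [heval]
      _ = c⁻¹ • ∫ y in c * a + d..c * b + d, (v y - p.eval y) * w'.eval y :=
          intervalIntegral.integral_comp_mul_add
            (fun y => (v y - p.eval y) * w'.eval y) hc d
      _ = 0 := by rw [hp.integral_eq_zero w' hdeg, smul_zero]

theorem integral_eval_mul (hv : IntervalIntegrable v volume a b)
    (hp : IsDGInterpolant q a b v p) (hw : w.natDegree + 1 ≤ q) :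
    ∫ x in a..b, p.eval x * w.eval x = ∫ x in a..b, v x * w.eval x := by
  have horth := hp.integral_eq_zero w hw
  simp only [sub_mul] at horth
  rw [intervalIntegral.integral_sub (intervalIntegrable_mul_eval hv w)
    (intervalIntegrable_mul_eval (intervalIntegrable_eval p a b) w)] at horth
  exact (sub_eq_zero.mp horth).symm

end IsDGInterpolant

/-- The value at `1` and the moments of order less than `q` on `[0, 1]` of a polynomial: the data
that determine a dG interpolant on the reference interval. -/
noncomputable def endpointMoments (q : ℕ) : ℝ[X] →ₗ[ℝ] ℝ × (Fin q → ℝ) where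
  toFun p := (p.eval 1, fun j => ∫ x in (0 : ℝ)..1, p.eval x * x ^ (j : ℕ))
  map_add' p r := by
    ext j
    · simp
    · have hint (p : ℝ[X]) : IntervalIntegrable (fun x => p.eval x * x ^ (j : ℕ)) volume 0 1 :=
        Continuous.intervalIntegrable (by fun_prop) 0 1
      simp [add_mul, intervalIntegral.integral_add (hint p) (hint r)]
  map_smul' c p := by
    ext j <;> simp [mul_assoc]

theorem integral_eval_mul_eval_eq_sum_moments (p : ℝ[X]) (hw : w.natDegree < q) :
    ∫ x in (0 : ℝ)..1, p.eval x * w.eval x =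
      ∑ j : Fin q, w.coeff j * (endpointMoments q p).2 j := by
  calc ∫ x in (0 : ℝ)..1, p.eval x * w.eval x
      = ∫ x in (0 : ℝ)..1, ∑ j : Fin q, w.coeff j * (p.eval x * x ^ (j : ℕ)) := by
        congr 1 with x
        rw [eval_eq_sum_range' hw, Finset.mul_sum,
          ← Fin.sum_univ_eq_sum_range (fun i => p.eval x * (w.coeff i * x ^ i))]
        exact Finset.sum_congr rfl fun j _ => mul_left_comm _ _ _
    _ = ∑ j : Fin q, w.coeff j * (endpointMoments q p).2 j := by
        rw [intervalIntegral.integral_finsetSum fun j _ =>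
          Continuous.intervalIntegrable (by fun_prop) 0 1]
        simp only [intervalIntegral.integral_const_mul]
        rfl

theorem eq_zero_of_endpointMoments_eq_zero (hdeg : p.natDegree ≤ q)
    (hp : endpointMoments q p = 0) : p = 0 := by
  refine IsDGInterpolant.eq_zero (q := q) zero_lt_one ⟨hdeg, congrArg Prod.fst hp, fun w hw => ?_⟩
  simp [integral_eval_mul_eval_eq_sum_moments p hw, hp]

theorem exists_abs_eval_le_mul_norm_endpointMoments (q : ℕ) :
    ∃ K : ℝ, 0 < K ∧ ∀ p : ℝ[X], p.natDegree ≤ q → ∀ x ∈ Set.Icc (0 : ℝ) 1,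
      |p.eval x| ≤ K * ‖endpointMoments q p‖ := by
  have hker : LinearMap.ker ((endpointMoments q).domRestrict (degreeLE ℝ q)) = ⊥ :=
    LinearMap.ker_eq_bot'.mpr fun p hp => Subtype.ext <|
      eq_zero_of_endpointMoments_eq_zero (natDegree_le_of_degree_le (mem_degreeLE.mp p.2)) hp
  obtain ⟨K, hK, hbound⟩ := exists_norm_le_mul_norm_of_ker_eq_bot _ hker
    ((toContinuousMapOnAlgHom (Set.Icc (0 : ℝ) 1)).toLinearMap.domRestrict (degreeLE ℝ q))
  refine ⟨K, hK, fun p hp x hx => ?_⟩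
  exact (ContinuousMap.norm_coe_le_norm (p.toContinuousMapOn (Set.Icc 0 1)) ⟨x, hx⟩).trans
    (hbound ⟨p, mem_degreeLE.mpr (degree_le_of_natDegree_le hp)⟩)

namespace IsDGInterpolant

theorem norm_endpointMoments_le {M : ℝ} (hv : IntervalIntegrable v volume 0 1)
    (hM : ∀ x ∈ Set.Ioc (0 : ℝ) 1, |v x| ≤ M) (hp : IsDGInterpolant q 0 1 v p) :
    ‖endpointMoments q p‖ ≤ M := by
  have hv1 : |v 1| ≤ M := hM 1 ⟨one_pos, le_rfl⟩
  refine max_le (by simpa [endpointMoments, hp.eval_right] using hv1) ?_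
  refine (pi_norm_le_iff_of_nonneg ((abs_nonneg _).trans hv1)).mpr fun j => ?_
  have hmoment : (endpointMoments q p).2 j = ∫ x in (0 : ℝ)..1, v x * x ^ (j : ℕ) := by
    simpa [endpointMoments] using
      hp.integral_eval_mul hv (w := X ^ (j : ℕ)) (by rw [natDegree_X_pow]; exact j.2)
  have hpointwise : ∀ x ∈ Set.uIoc (0 : ℝ) 1, ‖v x * x ^ (j : ℕ)‖ ≤ M := by
    intro x hx
    rw [Set.uIoc_of_le zero_le_one] at hx
    rw [norm_mul, norm_pow, Real.norm_of_nonneg hx.1.le]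
    exact (mul_le_of_le_one_right (norm_nonneg _) (pow_le_one₀ hx.1.le hx.2)).trans (hM x hx)
  rw [hmoment]
  simpa using intervalIntegral.norm_integral_le_of_norm_le_const hpointwise

theorem exists_abs_eval_le (q : ℕ) :
    ∃ K : ℝ, 0 < K ∧ ∀ {a b : ℝ} {v : ℝ → ℝ} {p : ℝ[X]} {M : ℝ}, a < b →
      IntervalIntegrable v volume a b → (∀ x ∈ Set.Ioc a b, |v x| ≤ M) →
      IsDGInterpolant q a b v p → ∀ x ∈ Set.Icc a b, |p.eval x| ≤ K * M := by
  obtain ⟨K, hK, hbound⟩ := exists_abs_eval_le_mul_norm_endpointMoments q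
  refine ⟨K, hK, fun {a b v p M} hab hv hM hp x hx => ?_⟩
  have hpos : 0 < b - a := sub_pos.mpr hab
  have hint : IntervalIntegrable (fun t => v ((b - a) * t + a)) volume 0 1 := by
    simpa [hpos.ne'] using (hv.comp_add_right a).comp_mul_left (c := b - a)
  have hMt : ∀ t ∈ Set.Ioc (0 : ℝ) 1, |v ((b - a) * t + a)| ≤ M := fun t ht =>
    hM _ ⟨by nlinarith [ht.1], by nlinarith [ht.2]⟩
  have href : IsDGInterpolant q 0 1 (fun t => v ((b - a) * t + a))
      (p.comp (C (b - a) * X + C a)) :=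
    comp_mul_add hpos.ne' (by simpa using hp)
  have hx01 : (x - a) / (b - a) ∈ Set.Icc (0 : ℝ) 1 :=
    ⟨div_nonneg (sub_nonneg.mpr hx.1) hpos.le, div_le_one_of_le₀ (by linarith [hx.2]) hpos.le⟩
  calc |p.eval x| = |(p.comp (C (b - a) * X + C a)).eval ((x - a) / (b - a))| := by
        simp [mul_div_cancel₀ _ hpos.ne']
    _ ≤ K * ‖endpointMoments q (p.comp (C (b - a) * X + C a))‖ :=
        hbound _ href.natDegree_le _ hx01
    _ ≤ K * M := by gcongr; exact href.norm_endpointMoments_le hint hMt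

end IsDGInterpolant

end DGInterpolant

/-- Properties of the dG interpolant `π_dG^[q]`: for `q ≥ 0` the map `v ↦ π_dG^[q] v`
(characterized by the interpolation and orthogonality conditions) is linear on
bounded integrable functions, reproduces polynomials of degree at most `q`, and is
bounded in the maximum norm by a constant `C = C(q) > 0` independent of the
interval `[a,b]`. -/
theorem dG_interpolant_properties (q : ℕ) :
    ∃ C : ℝ, 0 < C ∧ ∀ (a b : ℝ), a < b →
      ∀ interp : (ℝ → ℝ) → Polynomial ℝ,
        -- `interp` is the interpolant `π_dG^[q]` on `[a,b]`:
        (∀ v : ℝ → ℝ, IntervalIntegrable v volume a b →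
            (∃ M : ℝ, ∀ x ∈ Set.Icc a b, |v x| ≤ M) →
            (interp v).natDegree ≤ q ∧ (interp v).eval b = v b ∧
            ∀ w : Polynomial ℝ, w.natDegree + 1 ≤ q →
              (∫ x in a..b, (v x - (interp v).eval x) * w.eval x) = 0) →
        -- linearity (additivity and homogeneity) on bounded integrable functions
        ((∀ u v : ℝ → ℝ, IntervalIntegrable u volume a b →
            (∃ M : ℝ, ∀ x ∈ Set.Icc a b, |u x| ≤ M) →
            IntervalIntegrable v volume a b →
            (∃ M : ℝ, ∀ x ∈ Set.Icc a b, |v x| ≤ M) →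
            interp (u + v) = interp u + interp v) ∧
         (∀ (c : ℝ) (v : ℝ → ℝ), IntervalIntegrable v volume a b →
            (∃ M : ℝ, ∀ x ∈ Set.Icc a b, |v x| ≤ M) →
            interp (fun x => c * v x) = Polynomial.C c * interp v) ∧
         -- exactness on polynomials of degree at most q
         (∀ p : Polynomial ℝ, p.natDegree ≤ q → interp (fun x => p.eval x) = p) ∧
         -- boundedness: ‖π_dG v‖_{L∞} ≤ C ‖v‖_{L∞}
         (∀ v : ℝ → ℝ, IntervalIntegrable v volume a b →
            (∃ M : ℝ, ∀ x ∈ Set.Icc a b, |v x| ≤ M) →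
            ∀ M : ℝ, (∀ x ∈ Set.Icc a b, |v x| ≤ M) →
              ∀ x ∈ Set.Icc a b, |(interp v).eval x| ≤ C * M)) := by
  obtain ⟨K, hK, hbound⟩ := IsDGInterpolant.exists_abs_eval_le q
  refine ⟨K, hK, fun a b hab interp hinterp => ?_⟩
  have hdG {v : ℝ → ℝ} (hv : IntervalIntegrable v volume a b)
      (hv_bdd : ∃ M : ℝ, ∀ x ∈ Set.Icc a b, |v x| ≤ M) : IsDGInterpolant q a b v (interp v) :=
    let ⟨hdeg, hright, horth⟩ := hinterp v hv hv_bdd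
    ⟨hdeg, hright, horth⟩
  refine ⟨?additive, ?homogeneous, ?reproducing, ?bounded⟩
  case additive =>
    rintro u v hu ⟨A, hA⟩ hv ⟨B, hB⟩
    have huv_bdd (x) (hx : x ∈ Set.Icc a b) : |(u + v) x| ≤ A + B :=
      (abs_add_le _ _).trans (add_le_add (hA x hx) (hB x hx))
    exact (hdG (hu.add hv) ⟨_, huv_bdd⟩).unique hab (hu.add hv)
      ((hdG hu ⟨A, hA⟩).add hu hv (hdG hv ⟨B, hB⟩))
  case homogeneous =>
    rintro c v hv ⟨M, hM⟩
    have hcv_bdd (x) (hx : x ∈ Set.Icc a b) : |c * v x| ≤ |c| * M := by grw [abs_mul, hM x hx]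
    exact (hdG (hv.const_mul c) ⟨_, hcv_bdd⟩).unique hab (hv.const_mul c)
      ((hdG hv ⟨M, hM⟩).const_mul c)
  case reproducing =>
    have hp_bdd (p : Polynomial ℝ) := isCompact_Icc.exists_bound_of_continuousOn
      (p.continuousOn (s := Set.Icc a b))
    exact fun p hp => (hdG (intervalIntegrable_eval p a b) (hp_bdd p)).unique hab
      (intervalIntegrable_eval p a b) (.of_eval hp)
  case bounded =>
    exact fun v hv hv_bdd M hM =>
      hbound hab hv (fun x hx => hM x (Set.Ioc_subset_Icc_self hx)) (hdG hv hv_bdd)
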